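/- Let β = (1+√5)/2. For J = (j_1,...,j_n) ∈ Ω_n with J strictly less than the maximal element Ĵ in lexicographic order, let J' ∈ Ω_n be the smallest element with J ≺ J'. Then L_{n,J'} = L_{n,J} + j_n β^{−n−1} + (1 − j_n) β^{−n}, and this quantity is strictly less than 1. -/

import Mathlib

open MeasureTheory Real Filter

/-- The golden ratio. -/
noncomputable def gr : ℝ := (1 + Real.sqrt 5) / 2

/-- Binary strings of length `n` with no two consecutive ones. -/
def Omega (n : ℕ) : Finset (Fin n → Fin 2) :=
  Finset.univ.filter fun J =>
    ∀ k : Fin n, ∀ h : k.val + 1 < n, (J k : ℕ) * (J ⟨k.val + 1, h⟩ : ℕ) = 0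

/-- `L (j_1,…,j_n) = ∑ j_k β^{-k}`. -/
noncomputable def L {n : ℕ} (J : Fin n → Fin 2) : ℝ :=
  ∑ k : Fin n, ((J k : ℕ) : ℝ) * gr ^ (-(k.val + 1 : ℤ))

/-- The last digit `j_n` of a string. -/
def lastD {n : ℕ} (J : Fin n → Fin 2) : ℕ :=
  if h : 0 < n then (J ⟨n - 1, Nat.sub_lt h one_pos⟩ : ℕ) else 0

/-- The length of `I_{n,J}`. -/
noncomputable def Ilen {n : ℕ} (J : Fin n → Fin 2) : ℝ :=
  (lastD J : ℝ) * gr ^ (-(n + 1 : ℤ)) + (1 - (lastD J : ℝ)) * gr ^ (-(n : ℤ))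

/-- The interval `I_{n,J}`. -/
noncomputable def Ival {n : ℕ} (J : Fin n → Fin 2) : Set ℝ :=
  Set.Ico (L J) (L J + Ilen J)

/-- The base-β transformation (β = golden ratio). -/
noncomputable def T (x : ℝ) : ℝ := gr * x - ⌊gr * x⌋

/-- The invariant density. -/
noncomputable def fGold (x : ℝ) : ℝ :=
  if x < gr⁻¹ then (1 + gr) / Real.sqrt 5 else gr / Real.sqrt 5

/-- The pdf of `T^n X` when `X` has pdf `f`. -/
noncomputable def evolve (n : ℕ) (f : ℝ → ℝ) (x : ℝ) : ℝ :=
  if x < gr⁻¹ then ∑ J ∈ Omega n, gr ^ (-(n : ℤ)) * f (L J + x * gr ^ (-(n : ℤ)))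
  else ∑ J ∈ (Omega n).filter (fun J => lastD J = 0),
    gr ^ (-(n : ℤ)) * f (L J + x * gr ^ (-(n : ℤ)))

/-- The lexicographically maximal element of `Omega n`. -/
def Jhat (n : ℕ) : Fin n → Fin 2 := fun k => if Odd (k.val + 1) then 1 else 0

/-- Strict lexicographic order on strings. -/
def lexLt {n : ℕ} (J K : Fin n → Fin 2) : Prop :=
  ∃ i : Fin n, (∀ j : Fin n, j < i → J j = K j) ∧ J i < K i

/-- The digits of a string as a sequence on `ℕ`, extended by zero. -/
def digit {n : ℕ} (J : Fin n → Fin 2) (k : ℕ) : ℕ :=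
  if h : k < n then (J ⟨k, h⟩ : ℕ) else 0

/-- The string that agrees with `J` before position `m`, has a one there and zeros afterwards. -/
def bump {n : ℕ} (J : Fin n → Fin 2) (m : ℕ) : Fin n → Fin 2 :=
  fun j => if j.val < m then J j else if j.val = m then 1 else 0

lemma gr_pos : 0 < gr := by
  unfold gr
  positivity

lemma gr_inv_sq : gr⁻¹ ^ 2 = 1 - gr⁻¹ := by
  have h : gr ^ 2 = gr + 1 := by
    unfold gr
    nlinarith [Real.sq_sqrt (show (0 : ℝ) ≤ 5 by norm_num)]
  have := gr_pos.ne'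
  field_simp
  linarith

lemma gr_inv_pow_add_two (m : ℕ) : gr⁻¹ ^ (m + 2) = gr⁻¹ ^ m - gr⁻¹ ^ (m + 1) := by
  rw [pow_add, gr_inv_sq]
  ring

lemma gr_zpow_neg (m : ℕ) : gr ^ (-(m : ℤ)) = gr⁻¹ ^ m := by
  rw [zpow_neg, zpow_natCast, inv_pow]

section Digits

variable {n : ℕ} {J : Fin n → Fin 2}

lemma digit_of_lt {k : ℕ} (h : k < n) : digit J k = (J ⟨k, h⟩ : ℕ) := by
  simp [digit, h]

lemma digit_eq_zero_or_one (J : Fin n → Fin 2) (k : ℕ) : digit J k = 0 ∨ digit J k = 1 := by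
  unfold digit
  split_ifs <;> omega

lemma digit_mul_digit_succ (hJ : J ∈ Omega n) (k : ℕ) : digit J k * digit J (k + 1) = 0 := by
  by_cases h : k + 1 < n
  · have := (Finset.mem_filter.mp hJ).2 ⟨k, by omega⟩ h
    rwa [digit_of_lt h, digit_of_lt (by omega : k < n)]
  · simp [digit, h]

lemma mem_Omega_of_digit (h : ∀ k, digit J k * digit J (k + 1) = 0) : J ∈ Omega n := by
  refine Finset.mem_filter.mpr ⟨Finset.mem_univ _, fun k hk => ?_⟩
  have := h k
  rwa [digit_of_lt hk, digit_of_lt k.2] at this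

lemma L_eq_sum_digit (J : Fin n → Fin 2) :
    L J = ∑ k ∈ Finset.range n, (digit J k : ℝ) * gr⁻¹ ^ (k + 1) := by
  rw [Finset.sum_range]
  refine Finset.sum_congr rfl fun k _ => ?_
  rw [digit_of_lt k.2, ← gr_zpow_neg]
  push_cast
  rfl

lemma lastD_eq_digit (J : Fin (n + 1) → Fin 2) : lastD J = digit J n := by
  simp [lastD, digit]

lemma lexLt_iff_digit {K : Fin n → Fin 2} :
    lexLt J K ↔ ∃ i < n, (∀ j < i, digit J j = digit K j) ∧ digit J i = 0 ∧ digit K i = 1 := by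
  constructor
  · rintro ⟨i, h, hi⟩
    refine ⟨i, i.2, fun j hj => ?_, ?_⟩
    · rw [digit_of_lt (hj.trans i.2), digit_of_lt (hj.trans i.2), h ⟨j, hj.trans i.2⟩ hj]
    · rw [digit_of_lt i.2, digit_of_lt i.2]
      have : (J i : ℕ) < K i := hi
      constructor <;> simp only [Fin.eta] <;> omega
  · rintro ⟨i, hi, h, h0, h1⟩
    refine ⟨⟨i, hi⟩, fun j hj => ?_, ?_⟩
    · have := h j hj
      rw [digit_of_lt j.2, digit_of_lt j.2] at this
      exact Fin.ext this
    · rw [digit_of_lt hi] at h0 h1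
      exact Fin.lt_def.mpr (by omega)

lemma digit_bump {m : ℕ} (hm : m < n) (k : ℕ) :
    digit (bump J m) k = if k < m then digit J k else if k = m then 1 else 0 := by
  unfold digit bump
  split_ifs <;> first | rfl | omega

lemma bump_mem_Omega (hJ : J ∈ Omega n) {m : ℕ} (hm : m < n)
    (h : ∀ k, k + 1 = m → digit J k = 0) : bump J m ∈ Omega n := by
  refine mem_Omega_of_digit fun k => ?_
  have h1 := digit_mul_digit_succ hJ k
  have h2 := h k
  rw [digit_bump hm, digit_bump hm]
  split_ifs <;> omega

lemma lexLt_bump {m : ℕ} (hm : m < n) (h : digit J m = 0) : lexLt J (bump J m) := by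
  refine lexLt_iff_digit.mpr ⟨m, hm, fun j hj => ?_, h, ?_⟩ <;> rw [digit_bump hm]
  · simp [hj]
  · simp

/-- Partial sums of an admissible string leave room for the length of its cylinder. -/
lemma sum_digit_le (hJ : J ∈ Omega n) (m : ℕ) :
    ∑ k ∈ Finset.range (m + 1), (digit J k : ℝ) * gr⁻¹ ^ (k + 1)
      ≤ 1 - gr⁻¹ ^ (m + 1 + digit J m) := by
  have hpos := inv_pos.mpr gr_pos
  induction m with
  | zero =>
    have := gr_inv_sq
    rcases digit_eq_zero_or_one J 0 with h | h <;> simp [h, -inv_pow] <;> nlinarith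
  | succ m ih =>
    rw [Finset.sum_range_succ]
    have hmul := digit_mul_digit_succ hJ m
    have h1 := gr_inv_pow_add_two (m + 1)
    have h2 := pow_pos hpos (m + 1 + 2)
    rcases digit_eq_zero_or_one J m with h | h <;>
      rcases digit_eq_zero_or_one J (m + 1) with h' | h' <;>
      simp only [h, h', Nat.cast_zero, Nat.cast_one, zero_mul, one_mul, add_zero] at ih hmul ⊢ <;>
      first | omega | linarith

/-- Truncations of the successor `J'` of `J` beyond their first difference. -/
lemma sum_digit_succ {J' : Fin n → Fin 2} (hJ : J ∈ Omega n) (hJ' : J' ∈ Omega n)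
    (hmin : ∀ K ∈ Omega n, lexLt J K → ¬ lexLt K J')
    {i : ℕ} (hi : i < n) (heq : ∀ j < i, digit J j = digit J' j)
    (h0 : digit J i = 0) (h1 : digit J' i = 1) {m : ℕ} (him : i ≤ m) (hm : m < n) :
    ∑ k ∈ Finset.range (m + 1), (digit J' k : ℝ) * gr⁻¹ ^ (k + 1) =
      ∑ k ∈ Finset.range (m + 1), (digit J k : ℝ) * gr⁻¹ ^ (k + 1)
        + gr⁻¹ ^ (m + 1 + digit J m) := by
  have htail : ∀ k, i < k → digit J' k = 0 := by
    by_contra! hne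
    classical
    obtain ⟨hk, hk0⟩ := Nat.find_spec hne
    have hfirst := fun j => Nat.find_min hne (m := j)
    set k := Nat.find hne
    have hkn : k < n := by
      by_contra hkn
      exact hk0 (by simp [digit, hkn])
    refine hmin (bump J i) (bump_mem_Omega hJ hi fun j hj => ?_) (lexLt_bump hi h0) ?_
    · have := digit_mul_digit_succ hJ' j
      rw [hj, h1, mul_one] at this
      rw [heq j (by omega), this]
    · refine lexLt_iff_digit.mpr ⟨k, hkn, fun j hj => ?_, ?_, ?_⟩
      · rw [digit_bump hi]
        split_ifs with hlt' he
        · exact heq j hlt'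
        · rw [he, h1]
        · have := hfirst j hj
          push Not at this
          exact (this (by omega)).symm
      · rw [digit_bump hi, if_neg (by omega), if_neg (by omega)]
      · exact (digit_eq_zero_or_one J' k).resolve_left hk0
  induction m, him using Nat.le_induction with
  | base =>
    rw [Finset.sum_range_succ, Finset.sum_range_succ, h0, h1,
      Finset.sum_congr rfl fun j hj => by rw [← heq j (Finset.mem_range.mp hj)]]
    simp
  | succ m him ih =>
    have hmul := digit_mul_digit_succ hJ m
    have hgreedy : digit J m = 0 → digit J (m + 1) = 1 := fun hz => by
      refine (digit_eq_zero_or_one J (m + 1)).resolve_left fun hz' => ?_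
      refine hmin (bump J (m + 1)) (bump_mem_Omega hJ hm fun k hk => ?_) (lexLt_bump hm hz')
        (lexLt_iff_digit.mpr ⟨i, hi, fun j hj => ?_, ?_, h1⟩)
      · obtain rfl : k = m := by omega
        exact hz
      · rw [digit_bump hm, if_pos (by omega), heq j hj]
      · rw [digit_bump hm, if_pos (by omega), h0]
    rw [Finset.sum_range_succ, Finset.sum_range_succ _ (m + 1), ih (by omega),
      htail (m + 1) (by omega)]
    have hpow := gr_inv_pow_add_two (m + 1)
    rcases digit_eq_zero_or_one J m with h | h
    · rw [hgreedy h, h]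
      simp only [Nat.cast_zero, Nat.cast_one, zero_mul, one_mul, add_zero]
      linarith
    · rw [h, one_mul] at hmul
      rw [hmul, h]
      simp

end Digits

theorem L_succ (n : ℕ) (hn : 0 < n) (J J' : Fin n → Fin 2)
    (hJ : J ∈ Omega n) (hJhat : lexLt J (Jhat n))
    (hJ' : J' ∈ Omega n) (hlt : lexLt J J')
    (hmin : ∀ K ∈ Omega n, lexLt J K → ¬ lexLt K J') :
    L J' = L J + (lastD J : ℝ) * gr ^ (-(n + 1 : ℤ))
        + (1 - (lastD J : ℝ)) * gr ^ (-(n : ℤ)) ∧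
    L J + (lastD J : ℝ) * gr ^ (-(n + 1 : ℤ))
        + (1 - (lastD J : ℝ)) * gr ^ (-(n : ℤ)) < 1 := by
  obtain ⟨m, rfl⟩ : ∃ m, n = m + 1 := ⟨n - 1, by omega⟩
  have hlen : L J + (lastD J : ℝ) * gr ^ (-((m + 1 : ℕ) + 1 : ℤ))
      + (1 - (lastD J : ℝ)) * gr ^ (-((m + 1 : ℕ) : ℤ)) = L J + gr⁻¹ ^ (m + 1 + digit J m) := by
    have h := gr_zpow_neg (m + 1 + 1)
    rw [Nat.cast_succ] at h
    rw [h, gr_zpow_neg, lastD_eq_digit]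
    rcases digit_eq_zero_or_one J m with h | h <;> simp [h]
  obtain ⟨i, hi, heq, h0, h1⟩ := lexLt_iff_digit.mp hlt
  have hsucc : L J' = L J + gr⁻¹ ^ (m + 1 + digit J m) := by
    rw [L_eq_sum_digit, L_eq_sum_digit]
    exact sum_digit_succ hJ hJ' hmin hi heq h0 h1 (by omega) (by omega)
  rw [hlen]
  refine ⟨hsucc, ?_⟩
  rw [← hsucc, L_eq_sum_digit]
  have := pow_pos (inv_pos.mpr gr_pos) (m + 1 + digit J' m)
  linarith [sum_digit_le hJ' m]
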